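/- Let X and Y be complex Banach spaces. The mapping Φ : 𝓗𝓛₀(B_X, Y) → 𝓗^∞_s(B_X, 𝓛(X,Y)) given by Φ(f) = df is a surjective isometry: for every f ∈ 𝓗𝓛₀(B_X, Y), df belongs to 𝓗^∞_s(B_X, 𝓛(X,Y)) with L(f) = sup_{x∈B_X} ‖df(x)‖, and every g ∈ 𝓗^∞_s(B_X, 𝓛(X,Y)) equals df for some f ∈ 𝓗𝓛₀(B_X, Y). -/

import Mathlib

/-!
The Schwarz lemma bounds the second-order Taylor remainder of a bounded holomorphic map on a ball
by a constant times the square of the distance to the centre. Hence the difference quotients of a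
holomorphic `f` in a direction `v` converge uniformly near every point, so `u ↦ df(u) v` is
holomorphic. The same remainder bound, being uniform in `v`, upgrades this to holomorphy of `df` in
operator norm. Symmetry is then that of the second derivative, the isometry is the mean value
inequality on a convex set, and a symmetric `g` is a closed 1-form, which has a primitive by the
Poincaré lemma.
-/

open Metric Set Filter Topology
open scoped NNReal

section Holomorphic

variable {X Y Z : Type*} [NormedAddCommGroup X] [NormedSpace ℂ X]
  [NormedAddCommGroup Y] [NormedSpace ℂ Y] [NormedAddCommGroup Z] [NormedSpace ℂ Z]
  {f : X → Y} {z : X} {R M : ℝ}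

theorem norm_fderiv_le_of_forall_mem_ball_norm_le (hR : 0 < R)
    (hf : DifferentiableOn ℂ f (ball z R)) (hM : ∀ u ∈ ball z R, ‖f u‖ ≤ M) :
    ‖fderiv ℂ f z‖ ≤ 2 * M / R := by
  refine Complex.norm_fderiv_le_div_of_mapsTo_ball hf (fun u hu ↦ ?_) hR
  rw [mem_closedBall, dist_eq_norm]
  linarith [norm_sub_le (f u) (f z), hM u hu, hM z (mem_ball_self hR)]

theorem norm_sub_sub_fderiv_le_of_forall_mem_ball_norm_le {w : X}
    (hf : DifferentiableOn ℂ f (ball z R)) (hM : ∀ u ∈ ball z R, ‖f u‖ ≤ M) (hw : w ∈ ball z R) :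
    ‖f w - f z - fderiv ℂ f z (w - z)‖ ≤ 4 * M / R ^ 2 * ‖w - z‖ ^ 2 := by
  have hR : 0 < R := pos_of_mem_ball hw
  set remainder : X → Y := fun u ↦ f u - f z - fderiv ℂ f z (u - z)
  have remainder_self : remainder z = 0 := by simp [remainder]
  have remainder_differentiableOn : DifferentiableOn ℂ remainder (ball z R) := by
    fun_prop
  have remainder_mapsTo : MapsTo remainder (ball z R) (closedBall (remainder z) (4 * M)) := by
    intro u hu
    have linear_le : ‖fderiv ℂ f z (u - z)‖ ≤ 2 * M := calc
      ‖fderiv ℂ f z (u - z)‖ ≤ 2 * M / R * R :=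
        (fderiv ℂ f z).le_of_opNorm_le_of_le
          (norm_fderiv_le_of_forall_mem_ball_norm_le hR hf hM) (mem_ball_iff_norm.1 hu).le
      _ = 2 * M := div_mul_cancel₀ _ hR.ne'
    rw [remainder_self, mem_closedBall_zero_iff]
    linarith [norm_sub_le (f u - f z) (fderiv ℂ f z (u - z)), norm_sub_le (f u) (f z), hM u hu,
      hM z (mem_ball_self hR)]
  have remainder_isLittleO : (remainder · - remainder z) =o[𝓝 z] fun u ↦ ‖u - z‖ ^ 1 := by
    simpa [remainder_self, remainder] using
      (hf.differentiableAt (ball_mem_nhds z hR)).hasFDerivAt.isLittleO.norm_right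
  have schwarz := Complex.dist_le_mul_div_pow_of_mapsTo_ball_of_isLittleO
    remainder_differentiableOn remainder_mapsTo remainder_isLittleO hw
  rw [remainder_self, dist_zero_right, dist_eq_norm] at schwarz
  exact schwarz.trans_eq (by ring)

theorem norm_inv_smul_sub_sub_fderiv_le {v : X} {t : ℂ}
    (hf : DifferentiableOn ℂ f (ball z R)) (hM : ∀ u ∈ ball z R, ‖f u‖ ≤ M) (ht : t ≠ 0)
    (htv : ‖t • v‖ < R) :
    ‖t⁻¹ • (f (z + t • v) - f z) - fderiv ℂ f z v‖ ≤ 4 * M / R ^ 2 * ‖v‖ ^ 2 * ‖t‖ := by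
  have remainder_le := norm_sub_sub_fderiv_le_of_forall_mem_ball_norm_le (w := z + t • v) hf hM
    (by simpa using htv)
  rw [add_sub_cancel_left, map_smul, norm_smul] at remainder_le
  calc ‖t⁻¹ • (f (z + t • v) - f z) - fderiv ℂ f z v‖
      = ‖t‖⁻¹ * ‖f (z + t • v) - f z - t • fderiv ℂ f z v‖ := by
        rw [← norm_inv, ← norm_smul, smul_sub _ _ (t • _), inv_smul_smul₀ ht]
    _ ≤ ‖t‖⁻¹ * (4 * M / R ^ 2 * (‖t‖ * ‖v‖) ^ 2) := by gcongr
    _ = 4 * M / R ^ 2 * ‖v‖ ^ 2 * ‖t‖ := by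
        have : ‖t‖ ≠ 0 := norm_ne_zero_iff.2 ht
        field_simp

theorem eventually_nhdsNE_norm_smul_lt (v : X) (hR : 0 < R) :
    ∀ᶠ t : ℂ in 𝓝[≠] 0, ‖t • v‖ < R :=
  (ContinuousAt.eventually_lt (by fun_prop) (by fun_prop) (by simpa using hR)).filter_mono
    nhdsWithin_le_nhds

theorem tendstoUniformlyOn_inv_smul_sub_fderiv_apply (hR : 0 < R)
    (hf : DifferentiableOn ℂ f (ball z R)) (hM : ∀ u ∈ ball z R, ‖f u‖ ≤ M) (v : X) :
    TendstoUniformlyOn (fun (t : ℂ) u ↦ t⁻¹ • (f (u + t • v) - f u)) (fun u ↦ fderiv ℂ f u v)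
      (𝓝[≠] 0) (ball z (R / 2)) := by
  rw [Metric.tendstoUniformlyOn_iff]
  intro ε hε
  have error_small : ∀ᶠ t : ℂ in 𝓝[≠] 0, 4 * M / (R / 2) ^ 2 * ‖v‖ ^ 2 * ‖t‖ < ε :=
    (ContinuousAt.eventually_lt (by fun_prop) (by fun_prop) (by simpa using hε)).filter_mono
      nhdsWithin_le_nhds
  filter_upwards [eventually_nhdsNE_norm_smul_lt v (half_pos hR), error_small,
    self_mem_nhdsWithin] with t htv htε ht u hu
  have hball := ball_half_subset u hu
  rw [dist_comm, dist_eq_norm]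
  exact (norm_inv_smul_sub_sub_fderiv_le (hf.mono hball) (fun w hw ↦ hM w (hball hw)) ht
    htv).trans_lt htε

section UniformLimit

variable {ι : Type*} {l : Filter ι} {F : ι → X → Y}

theorem uniformCauchySeqOn_fderiv_ball_half (hR : 0 < R)
    (hF : UniformCauchySeqOn F l (ball z R)) (hd : ∀ᶠ n in l, DifferentiableOn ℂ (F n) (ball z R)) :
    UniformCauchySeqOn (fun n ↦ fderiv ℂ (F n)) l (ball z (R / 2)) := by
  intro s hs
  obtain ⟨ε, hε, hεs⟩ := Metric.mem_uniformity_dist.1 hs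
  filter_upwards [hF _ (Metric.dist_mem_uniformity (by positivity : 0 < ε * R / 8)),
    hd.prod_mk hd] with ⟨m, n⟩ hclose ⟨hm, hn⟩ u hu
  have hball := ball_half_subset u hu
  have hu_nhds : ball z R ∈ 𝓝 u :=
    mem_of_superset (ball_mem_nhds u (half_pos hR)) hball
  apply hεs
  calc dist (fderiv ℂ (F m) u) (fderiv ℂ (F n) u)
      = ‖fderiv ℂ (F m - F n) u‖ := by
        rw [dist_eq_norm, fderiv_sub (hm.differentiableAt hu_nhds) (hn.differentiableAt hu_nhds)]
    _ ≤ 2 * (ε * R / 8) / (R / 2) :=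
        norm_fderiv_le_of_forall_mem_ball_norm_le (half_pos hR) ((hm.sub hn).mono hball)
          fun w hw ↦ by simpa [dist_eq_norm] using (hclose w (hball hw)).le
    _ = ε / 2 := by field_simp; norm_num
    _ < ε := half_lt_self hε

theorem differentiableOn_of_tendstoUniformlyOn [CompleteSpace Y] [l.NeBot] {g : X → Y} {U : Set X}
    (hU : IsOpen U) (hFg : TendstoUniformlyOn F g l U)
    (hd : ∀ᶠ n in l, DifferentiableOn ℂ (F n) U) : DifferentiableOn ℂ g U := by
  intro z hz
  obtain ⟨R, hR, hRU⟩ := Metric.isOpen_iff.1 hU z hz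
  have hnhds : ball z (R / 2) ∈ 𝓝 z := ball_mem_nhds z (half_pos hR)
  have fderiv_cauchy : UniformCauchySeqOn (fun n ↦ fderiv ℂ (F n)) l (ball z (R / 2)) :=
    uniformCauchySeqOn_fderiv_ball_half hR (hFg.uniformCauchySeqOn.mono hRU)
      (hd.mono fun _ hn ↦ hn.mono hRU)
  choose! g' hg' using fun u (hu : u ∈ ball z (R / 2)) ↦
    CompleteSpace.complete (fderiv_cauchy.cauchy_map hu)
  have fderiv_tendsto : TendstoUniformlyOnFilter (fun n ↦ fderiv ℂ (F n)) g' l (𝓝 z) :=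
    (fderiv_cauchy.tendstoUniformlyOn_of_tendsto hg').tendstoUniformlyOnFilter.mono_right
      (le_principal_iff.2 hnhds)
  have hasFDerivAt_F : ∀ᶠ p : ι × X in l ×ˢ 𝓝 z,
      HasFDerivAt (F p.1) (fderiv ℂ (F p.1) p.2) p.2 := by
    filter_upwards [hd.prod_mk (hU.mem_nhds hz)] with p hp
    exact (hp.1.differentiableAt (hU.mem_nhds hp.2)).hasFDerivAt
  exact (hasFDerivAt_of_tendstoUniformlyOnFilter fderiv_tendsto hasFDerivAt_F
    ((hU.eventually_mem hz).mono fun _ hu ↦ hFg.tendsto_at hu)).differentiableAt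
      |>.differentiableWithinAt

end UniformLimit

theorem differentiableOn_fderiv_apply_ball_half [CompleteSpace Y] (hR : 0 < R)
    (hf : DifferentiableOn ℂ f (ball z R)) (hM : ∀ u ∈ ball z R, ‖f u‖ ≤ M) (v : X) :
    DifferentiableOn ℂ (fun u ↦ fderiv ℂ f u v) (ball z (R / 2)) := by
  refine differentiableOn_of_tendstoUniformlyOn isOpen_ball
    (tendstoUniformlyOn_inv_smul_sub_fderiv_apply hR hf hM v) ?_
  filter_upwards [eventually_nhdsNE_norm_smul_lt v (half_pos hR)] with t ht
  have translate_mapsTo : MapsTo (· + t • v) (ball z (R / 2)) (ball z R) := fun u hu ↦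
    ball_half_subset u hu (by simpa using ht)
  exact ((hf.comp (by fun_prop) translate_mapsTo).sub
    (hf.mono (ball_subset_ball (half_le_self hR.le)))).const_smul t⁻¹

theorem exists_clm_forall_apply_eq_fderiv_apply {g : X → Z →L[ℂ] Y} (hR : 0 < R)
    (hg : ∀ v, DifferentiableOn ℂ (fun u ↦ g u v) (ball z R)) (hM : ∀ u ∈ ball z R, ‖g u‖ ≤ M) :
    ∃ A : X →L[ℂ] Z →L[ℂ] Y, ∀ h v, A h v = fderiv ℂ (fun u ↦ g u v) z h := by
  have hgz v : DifferentiableAt ℂ (fun u ↦ g u v) z :=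
    (hg v).differentiableAt (ball_mem_nhds z hR)
  have fderiv_le v : ‖fderiv ℂ (fun u ↦ g u v) z‖ ≤ 2 * (M * ‖v‖) / R :=
    norm_fderiv_le_of_forall_mem_ball_norm_le hR (hg v)
      fun u hu ↦ (g u).le_of_opNorm_le (hM u hu) v
  let bilinear : X →ₗ[ℂ] Z →ₗ[ℂ] Y := LinearMap.mk₂ ℂ (fun h v ↦ fderiv ℂ (fun u ↦ g u v) z h)
    (fun _ _ _ ↦ map_add _ _ _) (fun _ _ _ ↦ map_smul _ _ _)
    (fun h v w ↦ by simp only [map_add, fderiv_fun_add (hgz v) (hgz w), add_apply])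
    (fun c h v ↦ by simp only [map_smul, fderiv_fun_const_smul (hgz v), smul_apply])
  refine ⟨bilinear.mkContinuous₂ (2 * M / R) fun h v ↦ ?_, fun _ _ ↦ rfl⟩
  exact ((fderiv ℂ (fun u ↦ g u v) z).le_of_opNorm_le (fderiv_le v) h).trans_eq (by ring)

theorem differentiableAt_clm_of_forall_apply {g : X → Z →L[ℂ] Y} (hR : 0 < R)
    (hg : ∀ v, DifferentiableOn ℂ (fun u ↦ g u v) (ball z R)) (hM : ∀ u ∈ ball z R, ‖g u‖ ≤ M) :
    DifferentiableAt ℂ g z := by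
  obtain ⟨A, hA⟩ := exists_clm_forall_apply_eq_fderiv_apply hR hg hM
  have hM_nonneg : 0 ≤ M := (norm_nonneg _).trans (hM z (mem_ball_self hR))
  have remainder_isBigO : (fun w ↦ g w - g z - A (w - z)) =O[𝓝 z] fun w ↦ ‖w - z‖ ^ 2 := by
    refine .of_bound (4 * M / R ^ 2) ?_
    filter_upwards [ball_mem_nhds z hR] with w hw
    refine ContinuousLinearMap.opNorm_le_bound _ (by positivity) fun v ↦ ?_
    have remainder_le := norm_sub_sub_fderiv_le_of_forall_mem_ball_norm_le (hg v)
      (fun u hu ↦ (g u).le_of_opNorm_le (hM u hu) v) hw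
    rw [← hA] at remainder_le
    refine remainder_le.trans_eq ?_
    rw [norm_pow, norm_norm]
    ring
  have : HasFDerivAt g A z :=
    .of_isLittleO <|
      remainder_isBigO.trans_isLittleO (Asymptotics.isLittleO_pow_sub_sub z one_lt_two)
  exact this.differentiableAt

theorem differentiableOn_fderiv_of_isOpen [CompleteSpace Y] {U : Set X} (hU : IsOpen U)
    (hf : DifferentiableOn ℂ f U) : DifferentiableOn ℂ (fderiv ℂ f) U := by
  intro z hz
  obtain ⟨R, hR, hball⟩ : ∃ R > 0, ball z R ⊆ {u | u ∈ U ∧ ‖f u‖ < ‖f z‖ + 1} := by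
    have hcont : ContinuousAt f z := hf.continuousOn.continuousAt (hU.mem_nhds hz)
    exact Metric.mem_nhds_iff.1 ((hU.eventually_mem hz).and
      (hcont.norm.eventually_lt_const (lt_add_one _)))
  have hfball : DifferentiableOn ℂ f (ball z R) := hf.mono fun u hu ↦ (hball hu).1
  have hfM : ∀ u ∈ ball z R, ‖f u‖ ≤ ‖f z‖ + 1 := fun u hu ↦ (hball hu).2.le
  have hfderiv : ∀ u ∈ ball z (R / 2), ‖fderiv ℂ f u‖ ≤ 2 * (‖f z‖ + 1) / (R / 2) := fun u hu ↦
    norm_fderiv_le_of_forall_mem_ball_norm_le (half_pos hR) (hfball.mono (ball_half_subset u hu))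
      fun w hw ↦ hfM w (ball_half_subset u hu hw)
  exact (differentiableAt_clm_of_forall_apply (half_pos hR)
    (differentiableOn_fderiv_apply_ball_half hR hfball hfM) hfderiv).differentiableWithinAt

end Holomorphic

theorem fderiv_clm_apply_const_apply {𝕜 X Y Z : Type*} [NontriviallyNormedField 𝕜]
    [NormedAddCommGroup X] [NormedSpace 𝕜 X] [NormedAddCommGroup Y] [NormedSpace 𝕜 Y]
    [NormedAddCommGroup Z] [NormedSpace 𝕜 Z] {g : X → Z →L[𝕜] Y} {z : X}
    (hg : DifferentiableAt 𝕜 g z) (v : Z) (w : X) :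
    fderiv 𝕜 (fun u ↦ g u v) z w = fderiv 𝕜 g z w v := by
  simp [fderiv_clm_apply hg (differentiableAt_const v)]

section RCLike

variable {𝕜 X Y : Type*} [RCLike 𝕜] [NormedAddCommGroup X] [NormedSpace 𝕜 X]
  [NormedAddCommGroup Y] [NormedSpace 𝕜 Y] {f : X → Y} {U : Set X}

theorem fderiv_fderiv_apply_comm {z : X} (hf : ∀ᶠ u in 𝓝 z, DifferentiableAt 𝕜 f u)
    (hf' : DifferentiableAt 𝕜 (fderiv 𝕜 f) z) (x y : X) :
    fderiv 𝕜 (fun u ↦ fderiv 𝕜 f u x) z y = fderiv 𝕜 (fun u ↦ fderiv 𝕜 f u y) z x := by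
  rw [fderiv_clm_apply_const_apply hf', fderiv_clm_apply_const_apply hf']
  exact second_derivative_symmetric_of_eventually (hf.mono fun _ hu ↦ hu.hasFDerivAt)
    hf'.hasFDerivAt y x

variable [NormedSpace ℝ X]

theorem forall_norm_sub_le_iff_forall_norm_fderiv_le (hUc : Convex ℝ U) (hUo : IsOpen U)
    (hf : DifferentiableOn 𝕜 f U) {C : ℝ} (hC : 0 ≤ C) :
    (∀ x ∈ U, ∀ y ∈ U, ‖f x - f y‖ ≤ C * ‖x - y‖) ↔ ∀ z ∈ U, ‖fderiv 𝕜 f z‖ ≤ C := by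
  refine ⟨fun hlip z hz ↦ norm_fderiv_le_of_lip' 𝕜 hC ?_, fun hbound x hx y hy ↦ ?_⟩
  · filter_upwards [hUo.mem_nhds hz] with x hx using hlip x hx z hz
  · exact hUc.norm_image_sub_le_of_norm_fderiv_le
      (fun u hu ↦ hf.differentiableAt (hUo.mem_nhds hu)) hbound hy hx

theorem sInf_lipschitz_constants_eq_sSup_norm_fderiv (hUc : Convex ℝ U) (hUo : IsOpen U)
    (hU : U.Nonempty) (hf : DifferentiableOn 𝕜 f U) {K : ℝ≥0} (hK : LipschitzOnWith K f U) :
    sInf {C : ℝ | 0 ≤ C ∧ ∀ x ∈ U, ∀ y ∈ U, ‖f x - f y‖ ≤ C * ‖x - y‖} =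
      sSup {r : ℝ | ∃ z ∈ U, r = ‖fderiv 𝕜 f z‖} := by
  obtain ⟨x₀, hx₀⟩ := hU
  have constants_eq_upperBounds :
      {C : ℝ | 0 ≤ C ∧ ∀ x ∈ U, ∀ y ∈ U, ‖f x - f y‖ ≤ C * ‖x - y‖} =
        upperBounds {r : ℝ | ∃ z ∈ U, r = ‖fderiv 𝕜 f z‖} := by
    ext C
    constructor
    · rintro ⟨hC, hlip⟩ _ ⟨z, hz, rfl⟩
      exact (forall_norm_sub_le_iff_forall_norm_fderiv_le hUc hUo hf hC).1 hlip z hz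
    · intro hbound
      have hC : 0 ≤ C := (norm_nonneg _).trans (hbound ⟨x₀, hx₀, rfl⟩)
      exact ⟨hC, (forall_norm_sub_le_iff_forall_norm_fderiv_le hUc hUo hf hC).2
        fun z hz ↦ hbound ⟨z, hz, rfl⟩⟩
  rw [constants_eq_upperBounds]
  refine csInf_upperBounds_eq_csSup ⟨K, ?_⟩ ⟨_, x₀, hx₀, rfl⟩
  rintro _ ⟨z, hz, rfl⟩
  exact norm_fderiv_le_of_lipschitzOn 𝕜 (hUo.mem_nhds hz) hK

theorem exists_forall_hasFDerivAt_of_fderiv_apply_comm [IsScalarTower ℝ 𝕜 X] [CompleteSpace Y]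
    (hUc : Convex ℝ U) (hUo : IsOpen U) {g : X → X →L[𝕜] Y} (hg : DifferentiableOn 𝕜 g U)
    (hsymm : ∀ x y, ∀ z ∈ U, fderiv 𝕜 (fun u ↦ g u x) z y = fderiv 𝕜 (fun u ↦ g u y) z x)
    (x₀ : X) : ∃ f : X → Y, f x₀ = 0 ∧ ∀ z ∈ U, HasFDerivAt f (g z) z := by
  let : NormedSpace ℝ Y := .restrictScalars ℝ 𝕜 Y
  have hgz z (hz : z ∈ U) : DifferentiableAt 𝕜 g z := hg.differentiableAt (hUo.mem_nhds hz)
  obtain ⟨f, hf⟩ : ∃ f : X → Y, ∀ z ∈ U, HasFDerivAt f (g z) z := by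
    refine hUc.exists_forall_hasFDerivAt_of_fderiv_symmetric hUo
      (fun z hz ↦ ((hgz z hz).restrictScalars ℝ).differentiableWithinAt) fun z hz x y ↦ ?_
    simpa only [(hgz z hz).fderiv_restrictScalars ℝ, ContinuousLinearMap.coe_restrictScalars',
      fderiv_clm_apply_const_apply (hgz z hz)] using hsymm y x z hz
  exact ⟨fun u ↦ f u - f x₀, sub_self _, fun z hz ↦ (hf z hz).sub_const _⟩

end RCLike

section Spaces

variable {X Y : Type*} [NormedAddCommGroup X] [NormedSpace ℂ X]
  [NormedAddCommGroup Y] [NormedSpace ℂ Y] {U : Set X} {x₀ : X}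

/-- Membership in the space `𝓗𝓛₀(U, Y)` of holomorphic Lipschitz maps on `U` vanishing at the base
point `x₀`. Only the values of `f` on `U` and at `x₀` matter. -/
def IsHolomorphicLipschitz (U : Set X) (x₀ : X) (f : X → Y) : Prop :=
  DifferentiableOn ℂ f U ∧ f x₀ = 0 ∧ ∃ K : ℝ≥0, LipschitzOnWith K f U

/-- Membership in the space `𝓗^∞_s(U, 𝓛(X, Y))` of bounded holomorphic operator-valued maps with
symmetric differential. The paper's `y ∘ d(x ∘ g)` at `z` is `fderiv ℂ (fun u ↦ g u x) z y`. -/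
def IsBoundedSymmetricHolomorphic (U : Set X) (g : X → X →L[ℂ] Y) : Prop :=
  DifferentiableOn ℂ g U ∧ (∃ C : ℝ, ∀ z ∈ U, ‖g z‖ ≤ C) ∧
    ∀ x y : X, ∀ z ∈ U, fderiv ℂ (fun u ↦ g u x) z y = fderiv ℂ (fun u ↦ g u y) z x

theorem IsHolomorphicLipschitz.isBoundedSymmetricHolomorphic_fderiv [CompleteSpace Y]
    (hUo : IsOpen U) {f : X → Y} (hf : IsHolomorphicLipschitz U x₀ f) :
    IsBoundedSymmetricHolomorphic U (fderiv ℂ f) := by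
  obtain ⟨hfd, -, K, hK⟩ := hf
  have hf' : DifferentiableOn ℂ (fderiv ℂ f) U := differentiableOn_fderiv_of_isOpen hUo hfd
  refine ⟨hf', ⟨K, fun z hz ↦ norm_fderiv_le_of_lipschitzOn ℂ (hUo.mem_nhds hz) hK⟩,
    fun x y z hz ↦ ?_⟩
  exact fderiv_fderiv_apply_comm (hfd.eventually_differentiableAt (hUo.mem_nhds hz))
    (hf'.differentiableAt (hUo.mem_nhds hz)) x y

theorem IsBoundedSymmetricHolomorphic.exists_isHolomorphicLipschitz [CompleteSpace Y]
    (hUc : Convex ℝ U) (hUo : IsOpen U) {g : X → X →L[ℂ] Y}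
    (hg : IsBoundedSymmetricHolomorphic U g) (x₀ : X) :
    ∃ f : X → Y, IsHolomorphicLipschitz U x₀ f ∧ ∀ z ∈ U, fderiv ℂ f z = g z := by
  obtain ⟨hgd, ⟨C, hC⟩, hsymm⟩ := hg
  obtain ⟨f, hfx₀, hf⟩ :=
    exists_forall_hasFDerivAt_of_fderiv_apply_comm hUc hUo hgd hsymm x₀
  have hlip : LipschitzOnWith C.toNNReal f U :=
    hUc.lipschitzOnWith_of_nnnorm_hasFDerivWithin_le (fun z hz ↦ (hf z hz).hasFDerivWithinAt)
      fun z hz ↦ NNReal.le_toNNReal_of_coe_le (hC z hz)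
  exact ⟨f, ⟨fun z hz ↦ (hf z hz).differentiableAt.differentiableWithinAt, hfx₀, _, hlip⟩,
    fun z hz ↦ (hf z hz).fderiv⟩

theorem stmt14_general [CompleteSpace Y] (hUc : Convex ℝ U) (hUo : IsOpen U) (hx₀ : x₀ ∈ U) :
    (∀ f : X → Y, IsHolomorphicLipschitz U x₀ f →
      IsBoundedSymmetricHolomorphic U (fderiv ℂ f)) ∧
    (∀ f : X → Y, IsHolomorphicLipschitz U x₀ f →
      sInf {K : ℝ | 0 ≤ K ∧ ∀ x ∈ U, ∀ y ∈ U, ‖f x - f y‖ ≤ K * ‖x - y‖} =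
        sSup {r : ℝ | ∃ z ∈ U, r = ‖fderiv ℂ f z‖}) ∧
    (∀ g : X → X →L[ℂ] Y, IsBoundedSymmetricHolomorphic U g →
      ∃ f : X → Y, IsHolomorphicLipschitz U x₀ f ∧ ∀ z ∈ U, fderiv ℂ f z = g z) :=
  ⟨fun _ hf ↦ hf.isBoundedSymmetricHolomorphic_fderiv hUo,
    fun _ ⟨hfd, _, _, hK⟩ ↦
      sInf_lipschitz_constants_eq_sSup_norm_fderiv hUc hUo ⟨x₀, hx₀⟩ hfd hK,
    fun _ hg ↦ hg.exists_isHolomorphicLipschitz hUc hUo x₀⟩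

end Spaces

/-- vector-valued version of Statement 7. Let `X, Y` be complex Banach
spaces.  The map `Φ : 𝓗𝓛₀(B_X, Y) → 𝓗^∞_s(B_X, 𝓛(X,Y))`, `Φ f = df`, is a surjective
isometry: for `f ∈ 𝓗𝓛₀(B_X, Y)` the differential `df` belongs to `𝓗^∞_s(B_X, 𝓛(X,Y))` with
`L(f) = sup_{x ∈ B_X} ‖df(x)‖`, and every `g ∈ 𝓗^∞_s(B_X, 𝓛(X,Y))` equals `df` for some
`f ∈ 𝓗𝓛₀(B_X, Y)`. -/
theorem stmt14 (X Y : Type*) [NormedAddCommGroup X] [NormedSpace ℂ X] [CompleteSpace X]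
    [NormedAddCommGroup Y] [NormedSpace ℂ Y] [CompleteSpace Y] :
    let B := Metric.ball (0 : X) 1
    let HL0 : (X → Y) → Prop := fun f =>
      DifferentiableOn ℂ f B ∧ f 0 = 0 ∧ ∃ K : NNReal, LipschitzOnWith K f B
    let Hs : (X → (X →L[ℂ] Y)) → Prop := fun g =>
      DifferentiableOn ℂ g B ∧ (∃ C : ℝ, ∀ z ∈ B, ‖g z‖ ≤ C) ∧
      ∀ x y : X, ∀ z ∈ B,
        fderiv ℂ (fun u => g u x) z y = fderiv ℂ (fun u => g u y) z x
    (∀ f : X → Y, HL0 f → Hs (fun z => fderiv ℂ f z)) ∧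
    (∀ f : X → Y, HL0 f →
      sInf {K : ℝ | 0 ≤ K ∧ ∀ x ∈ B, ∀ y ∈ B, ‖f x - f y‖ ≤ K * ‖x - y‖} =
        sSup {r : ℝ | ∃ z ∈ B, r = ‖fderiv ℂ f z‖}) ∧
    (∀ g : X → (X →L[ℂ] Y), Hs g →
      ∃ f : X → Y, HL0 f ∧ ∀ z ∈ B, fderiv ℂ f z = g z) :=
  stmt14_general (convex_ball 0 1) isOpen_ball (mem_ball_self one_pos)
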